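/- Let n ≥ 2 and let c₁, c₂ ∈ ℝ with (c₁,c₂) ≠ (0,0). Consider the two curve-germs in ℝ^{2n} (coordinates (p₁,q₁,p₂,q₂,…,pₙ,qₙ), all unlisted coordinates equal to 0): B₁(t) = (t³, (c₁²/2)t⁴, 0, −t², 0, …, 0) and B₂(t) = (t³, (c₂²/2)t⁴, −t², 0, 0, …, 0) (the class (T₇)²). Then Lt(B₁,B₂) = 2; Lt(B₁) = 5 if c₁ ≠ 0 and Lt(B₁) = ∞ if c₁ = 0; Lt(B₂) = 5 if c₂ ≠ 0 and Lt(B₂) = ∞ if c₂ = 0. -/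

import Mathlib

noncomputable section

/-- The order of vanishing at `0` of a function `h : ℝ → ℝ`: the least `k ≥ 1` such that
the `k`-th derivative of `h` at `0` is nonzero, and `∞` if all derivatives vanish at `0`. -/
def vanishOrder (h : ℝ → ℝ) : ℕ∞ :=
  sInf {k : ℕ∞ | ∃ m : ℕ, k = m ∧ 1 ≤ m ∧ iteratedDeriv m h 0 ≠ 0}

/-- The standard symplectic form `ω = ∑ dpᵢ ∧ dqᵢ` on `ℝ^{2n}`, where the coordinates are
ordered as `(p₁, q₁, …, pₙ, qₙ)` (so `pᵢ` has index `2(i-1)` and `qᵢ` has index `2(i-1)+1`). -/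
def stdSymp (n : ℕ) (u v : Fin (2 * n) → ℝ) : ℝ :=
  ∑ i : Fin n,
    (u ⟨2 * i.val, by have := i.isLt; omega⟩ * v ⟨2 * i.val + 1, by have := i.isLt; omega⟩ -
     u ⟨2 * i.val + 1, by have := i.isLt; omega⟩ * v ⟨2 * i.val, by have := i.isLt; omega⟩)

/-- A germ at `0` of a smooth Lagrangian submanifold of `(ℝ^{2n}, ω)`, given by `n` smooth
functions `H₁, …, Hₙ` vanishing at `0`, whose differentials are linearly independent at the
points of `{H₁ = ⋯ = Hₙ = 0}` near `0`, and such that `ω` vanishes on `ker DH(x)` at every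
such point. -/
structure LagrangianGerm (n : ℕ) : Type where
  H : Fin n → (Fin (2 * n) → ℝ) → ℝ
  smooth : ∀ i, ContDiff ℝ (⊤ : ℕ∞) (H i)
  zero_at_zero : ∀ i, H i 0 = 0
  lagrangian : ∃ U : Set (Fin (2 * n) → ℝ), IsOpen U ∧ 0 ∈ U ∧
    ∀ x ∈ U, (∀ i, H i x = 0) →
      LinearIndependent ℝ (fun i => fderiv ℝ (H i) x) ∧
      ∀ u v : Fin (2 * n) → ℝ, (∀ i, fderiv ℝ (H i) x u = 0) →
        (∀ i, fderiv ℝ (H i) x v = 0) → stdSymp n u v = 0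

/-- The tangency order `t(f, L)` of a curve `f` to a Lagrangian submanifold-germ `L`:
the minimum over `i` of the order of vanishing at `0` of `Hᵢ ∘ f`. -/
def tOrd {n : ℕ} (f : ℝ → Fin (2 * n) → ℝ) (L : LagrangianGerm n) : ℕ∞ :=
  ⨅ i : Fin n, vanishOrder (fun t => L.H i (f t))

/-- The Lagrangian tangency order `Lt(f)` of a curve `f`. -/
def Lt1 {n : ℕ} (f : ℝ → Fin (2 * n) → ℝ) : ℕ∞ :=
  ⨆ L : LagrangianGerm n, tOrd f L

/-- The Lagrangian tangency order `Lt(f, g)` of a multi-germ of two curves. -/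
def Lt2 {n : ℕ} (f g : ℝ → Fin (2 * n) → ℝ) : ℕ∞ :=
  ⨆ L : LagrangianGerm n, min (tOrd f L) (tOrd g L)

/-- The Lagrangian tangency order `Lt(f, g, h)` of a multi-germ of three curves. -/
def Lt3 {n : ℕ} (f g h : ℝ → Fin (2 * n) → ℝ) : ℕ∞ :=
  ⨆ L : LagrangianGerm n, min (tOrd f L) (min (tOrd g L) (tOrd h L))

/-!
If the tangency order of `t² a + t³ b + t⁴ d` to `L = {H = 0}` exceeds `2`, then `a ∈ T₀L`; hence
two such curves with `ω(a, a') ≠ 0` cannot both be tangent to `L` to order greater than `2`. If it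
exceeds `5`, then moreover `b ∈ T₀L`, `dH(d) = -½ D²H(a, a)` and `D²H(a, b) = 0`. The Poisson
brackets `{Hᵢ, Hⱼ}` vanish on `L`, so by Lagrange multipliers their differentials vanish on `T₀L`.
Since `T₀L` is spanned by the Hamiltonian vectors of the `Hᵢ`, this amounts to a symmetry of `D²H`
on `T₀L`, which combined with the jet conditions gives `ω(b, d) = 0`.

Up to a symplectic rotation of the `(p₂, q₂)`-plane, both branches of `(T₇)²` are `p₁ = t³`,
`q₁ = κ t⁴`, `p₂ = -t²` with `κ = c² / 2`. Here `ω(b, d) = κ`, so the order is at most `5` if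
`κ ≠ 0`. Conversely, along the branch the Lagrangian submanifold `q = dS(p)` with `S = κ p₁ p₂²`
satisfies all equations exactly, except the one for `q₂`, which fails by `2κ t⁵`.
-/

open Asymptotics Filter Polynomial Topology
open scoped ContDiff

section VanishOrder

variable {h : ℝ → ℝ} {N : ℕ}

theorem natCast_le_vanishOrder_iff :
    (N : ℕ∞) ≤ vanishOrder h ↔ ∀ k, 1 ≤ k → k < N → iteratedDeriv k h 0 = 0 := by
  rw [vanishOrder, le_sInf_iff]
  constructor
  · intro hN k hk hkN
    by_contra hne
    exact hkN.not_ge (by exact_mod_cast hN k ⟨k, rfl, hk, hne⟩)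
  · rintro hN _ ⟨k, rfl, hk, hne⟩
    exact_mod_cast not_lt.1 fun hkN => hne (hN k hk hkN)

theorem vanishOrder_const (c : ℝ) : vanishOrder (fun _ => c) = ⊤ :=
  ENat.eq_top_iff_forall_ge.2 fun _ => natCast_le_vanishOrder_iff.2 fun k hk _ => by
    rw [iteratedDeriv_const, if_neg (by lia)]

theorem natCast_le_vanishOrder_const_mul_pow (c : ℝ) (N : ℕ) :
    (N : ℕ∞) ≤ vanishOrder (fun t => c * t ^ N) :=
  natCast_le_vanishOrder_iff.2 fun k _ hkN => by
    rw [iteratedDeriv_const_mul_field, iteratedDeriv_fun_pow_zero, if_neg hkN.ne, Nat.cast_zero,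
      mul_zero]

theorem two_le_vanishOrder (hh : deriv h 0 = 0) : 2 ≤ vanishOrder h :=
  natCast_le_vanishOrder_iff (N := 2).2 fun k hk hk2 => by
    obtain rfl : k = 1 := by lia
    rwa [iteratedDeriv_one]

theorem isLittleO_pow_of_lt_vanishOrder (hh : ContDiff ℝ N h) (h0 : h 0 = 0)
    (hN : N < vanishOrder h) : h =o[𝓝 0] fun t => t ^ N := by
  have hderiv := natCast_le_vanishOrder_iff (N := N + 1).1 (Order.add_one_le_of_lt hN)
  have taylor_eq_zero (t : ℝ) : taylorWithinEval h N Set.univ 0 t = 0 := by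
    rw [taylor_within_apply]
    refine Finset.sum_eq_zero fun k hk => ?_
    rcases k.eq_zero_or_pos with rfl | hk0
    · simp [h0]
    · rw [iteratedDerivWithin_univ, hderiv k hk0 (Finset.mem_range.1 hk), smul_zero]
  simpa only [taylor_eq_zero, sub_zero] using taylor_isLittleO_univ (x₀ := 0) hh

end VanishOrder

section Taylor

variable {E F : Type*} [NormedAddCommGroup E] [NormedSpace ℝ E] [NormedAddCommGroup F]
  [NormedSpace ℝ F]

theorem isBigO_sub_sum_iteratedFDeriv [CompleteSpace F] {f : E → F} {n : ℕ}
    (hf : ContDiff ℝ (n + 1) f) (x : E) :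
    (fun y => f (x + y) - ∑ k ∈ Finset.range (n + 1),
      (k.factorial : ℝ)⁻¹ • iteratedFDeriv ℝ k f x fun _ => y) =O[𝓝 0] fun y => ‖y‖ ^ (n + 1) := by
  have hcont : ContinuousAt (iteratedFDeriv ℝ (n + 1) f) x :=
    hf.continuous_iteratedFDeriv'.continuousAt
  obtain ⟨C, hC⟩ := hcont.norm.isBoundedUnder_le
  obtain ⟨ε, hε, hball⟩ := Metric.eventually_nhds_iff_ball.1 (eventually_map.1 hC)
  refine IsBigO.of_bound ((n.factorial : ℝ)⁻¹ * C) ?_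
  filter_upwards [Metric.ball_mem_nhds (0 : E) hε] with y hy
  rw [mem_ball_zero_iff] at hy
  rw [map_add_eq_sum_add_integral_iteratedFDeriv fun t _ => hf.contDiffAt, add_sub_cancel_left,
    norm_smul, Real.norm_of_nonneg (by positivity), norm_pow, norm_norm, mul_assoc]
  gcongr
  refine (intervalIntegral.norm_integral_le_of_norm_le_const (C := C * ‖y‖ ^ (n + 1))
    fun t ht => ?_).trans_eq (by simp)
  rw [Set.uIoc_of_le zero_le_one] at ht
  have hty : x + t • y ∈ Metric.ball x ε := by
    rw [mem_ball_iff_norm, add_sub_cancel_left, norm_smul, Real.norm_of_nonneg ht.1.le]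
    exact (mul_le_of_le_one_left (norm_nonneg y) ht.2).trans_lt hy
  have hweight : ‖(1 - t) ^ n‖ ≤ 1 := by
    rw [norm_pow, Real.norm_of_nonneg (by linarith [ht.2])]
    exact pow_le_one₀ (by linarith [ht.2]) (by linarith [ht.1])
  calc ‖(1 - t) ^ n • iteratedFDeriv ℝ (n + 1) f (x + t • y) fun _ => y‖
      ≤ ‖iteratedFDeriv ℝ (n + 1) f (x + t • y) fun _ => y‖ := by
        rw [norm_smul]
        exact mul_le_of_le_one_left (norm_nonneg _) hweight
    _ ≤ ‖iteratedFDeriv ℝ (n + 1) f (x + t • y)‖ * ‖y‖ ^ (n + 1) := by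
        simpa using (iteratedFDeriv ℝ (n + 1) f (x + t • y)).le_opNorm fun _ => y
    _ ≤ C * ‖y‖ ^ (n + 1) := by gcongr; exact hball _ hty

theorem fderiv_fderiv_comm {f : E → F} (hf : ContDiff ℝ 2 f) (x u v : E) :
    fderiv ℝ (fderiv ℝ f) x u v = fderiv ℝ (fderiv ℝ f) x v u :=
  hf.contDiffAt.isSymmSndFDerivAt (by simp) u v

theorem isBigO_sub_fderiv_sub_fderiv_fderiv [CompleteSpace F] {f : E → F} (hf : ContDiff ℝ 3 f)
    (x : E) :
    (fun y => f (x + y) - f x - fderiv ℝ f x y - (2⁻¹ : ℝ) • fderiv ℝ (fderiv ℝ f) x y y)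
      =O[𝓝 0] fun y => ‖y‖ ^ 3 := by
  refine (isBigO_sub_sum_iteratedFDeriv (n := 2) (by exact_mod_cast hf) x).congr_left fun y => ?_
  simp [Finset.sum_range_succ, iteratedFDeriv_two_apply, sub_sub, add_assoc]

theorem apply_eq_zero_of_isLocalExtrOn {ι : Type*} [Finite ι] [CompleteSpace E] {f : ι → E → ℝ}
    {f' : ι → StrongDual ℝ E} {φ : E → ℝ} {φ' : StrongDual ℝ E} {x : E}
    (hextr : IsLocalExtrOn φ {y | ∀ i, f i y = f i x} x)
    (hf : ∀ i, HasStrictFDerivAt (f i) (f' i) x) (hφ : HasStrictFDerivAt φ φ' x)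
    (hli : LinearIndependent ℝ f') {w : E} (hw : ∀ i, f' i w = 0) : φ' w = 0 := by
  cases nonempty_fintype ι
  obtain ⟨Λ, Λ₀, hΛ, hsum⟩ := hextr.exists_multipliers_of_hasStrictFDerivAt hf hφ
  have hΛ₀ : Λ₀ ≠ 0 := by
    rintro rfl
    rw [zero_smul, add_zero] at hsum
    exact hΛ (Prod.ext (funext (Fintype.linearIndependent_iff.1 hli Λ hsum)) rfl)
  simpa [hw, hΛ₀] using congr($hsum w)

end Taylor

theorem coeff_eq_zero_of_eval_isLittleO {𝕜 : Type*} [NontriviallyNormedField 𝕜] {p : 𝕜[X]} {n : ℕ}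
    (hp : (fun t => p.eval t) =o[𝓝[≠] 0] fun t : 𝕜 => t ^ n) {k : ℕ} (hk : k ≤ n) :
    p.coeff k = 0 := by
  have coeff_zero {q : 𝕜[X]} {m : ℕ} (hq : (fun t => q.eval t) =o[𝓝[≠] 0] fun t : 𝕜 => t ^ m) :
      q.coeff 0 = 0 := by
    have hpow : (fun t : 𝕜 => t ^ m) =O[𝓝[≠] 0] fun _ => (1 : 𝕜) :=
      ((continuous_pow m).tendsto (0 : 𝕜)).mono_left nhdsWithin_le_nhds |>.isBigO_one 𝕜
    rw [coeff_zero_eq_eval_zero]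
    exact tendsto_nhds_unique ((q.continuous.tendsto 0).mono_left nhdsWithin_le_nhds)
      ((isLittleO_one_iff 𝕜).1 (hq.trans_isBigO hpow))
  induction k generalizing p n with
  | zero => exact coeff_zero hp
  | succ k ih =>
    obtain ⟨m, rfl⟩ : ∃ m, n = m + 1 := ⟨n - 1, by lia⟩
    rw [← coeff_divX]
    refine ih (n := m) ?_ (by lia)
    have hdiv := hp.mul_isBigO (isBigO_refl (fun t : 𝕜 => t⁻¹) _)
    refine hdiv.congr' ?_ ?_ <;> filter_upwards [self_mem_nhdsWithin] with t ht
    · nth_rw 1 [← p.divX_mul_X_add]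
      rw [coeff_zero hp, C_0, add_zero, eval_mul, eval_X, mul_inv_cancel_right₀ ht]
    · rw [pow_succ, mul_inv_cancel_right₀ ht]

section CuspCurve

variable {E : Type*} [NormedAddCommGroup E] [NormedSpace ℝ E]

/-- The polynomial curve `t ↦ t² a + t³ b + t⁴ d`; up to the choice of the vectors, both branches
of `(T₇)²` have this shape. -/
def cuspCurve (a b d : E) (t : ℝ) : E :=
  t ^ 2 • a + t ^ 3 • b + t ^ 4 • d

/-- The `5`-jet at `0` of `h ∘ cuspCurve a b d` for a function `h` vanishing at `0`. -/
def cuspJet (h : E → ℝ) (a b d : E) : ℝ[X] :=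
  C (fderiv ℝ h 0 a) * X ^ 2 + C (fderiv ℝ h 0 b) * X ^ 3 +
    C (fderiv ℝ h 0 d + 2⁻¹ * fderiv ℝ (fderiv ℝ h) 0 a a) * X ^ 4 +
    C (fderiv ℝ (fderiv ℝ h) 0 a b) * X ^ 5

variable {h : E → ℝ} {a b d : E}

theorem contDiff_cuspCurve {m : ℕ∞ω} (a b d : E) : ContDiff ℝ m (cuspCurve a b d) := by
  unfold cuspCurve; fun_prop

theorem cuspCurve_zero (a b d : E) : cuspCurve a b d 0 = 0 := by simp [cuspCurve]

theorem hasDerivAt_cuspCurve_zero (a b d : E) : HasDerivAt (cuspCurve a b d) 0 0 :=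
  ((((hasDerivAt_pow 2 (0 : ℝ)).smul_const a).fun_add
    ((hasDerivAt_pow 3 (0 : ℝ)).smul_const b)).fun_add
    ((hasDerivAt_pow 4 (0 : ℝ)).smul_const d)).congr_deriv (by simp)

theorem isBigO_cuspCurve (a b d : E) : cuspCurve a b d =O[𝓝 0] fun t => t ^ 2 := by
  have hbdd : (fun t : ℝ => a + t • b + t ^ 2 • d) =O[𝓝 0] fun _ => (1 : ℝ) :=
    (Continuous.tendsto (by fun_prop) 0).isBigO_one ℝ
  refine ((isBigO_refl (fun t : ℝ => t ^ 2) _).smul hbdd).congr (fun t => ?_) (by simp)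
  simp only [cuspCurve]
  module

theorem isBigO_comp_cuspCurve_sub_cuspJet (hh : ContDiff ℝ 3 h) (h0 : h 0 = 0) (a b d : E) :
    (fun t => h (cuspCurve a b d t) - (cuspJet h a b d).eval t) =O[𝓝 0] fun t => t ^ 6 := by
  set Q := fderiv ℝ (fderiv ℝ h) 0 with hQ
  have htendsto : Tendsto (cuspCurve a b d) (𝓝 0) (𝓝 0) := by
    simpa only [cuspCurve_zero] using
      (contDiff_cuspCurve (m := 0) a b d).continuous.tendsto 0
  have hcubic : (fun t => h (cuspCurve a b d t) - fderiv ℝ h 0 (cuspCurve a b d t) -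
      2⁻¹ * Q (cuspCurve a b d t) (cuspCurve a b d t)) =O[𝓝 0] fun t => t ^ 6 :=
    (((isBigO_sub_fderiv_sub_fderiv_fderiv hh 0).comp_tendsto htendsto).trans
      ((isBigO_cuspCurve a b d).norm_left.pow 3)).congr (fun t => by simp [h0, hQ]) fun t => by ring
  have hquadratic : (fun t : ℝ => t ^ 6 *
      (2⁻¹ * Q b b + Q a d + t * Q b d + t ^ 2 * (2⁻¹ * Q d d))) =O[𝓝 0] fun t => t ^ 6 := by
    have hbdd : (fun t : ℝ => 2⁻¹ * Q b b + Q a d + t * Q b d + t ^ 2 * (2⁻¹ * Q d d))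
        =O[𝓝 0] fun _ => (1 : ℝ) := (Continuous.tendsto (by fun_prop) 0).isBigO_one ℝ
    simpa only [mul_one] using (isBigO_refl (fun t : ℝ => t ^ 6) _).mul hbdd
  refine (hcubic.add hquadratic).congr_left fun t => ?_
  have hQ_comm (u v : E) : Q u v = Q v u :=
    fderiv_fderiv_comm (hh.of_le (by norm_num)) 0 u v
  simp only [cuspJet, ← hQ, eval_add, eval_mul, eval_C, eval_pow, eval_X]
  simp only [cuspCurve, map_add, map_smul, add_apply, smul_apply, smul_eq_mul, hQ_comm b a,
    hQ_comm d a, hQ_comm d b]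
  ring

theorem coeff_cuspJet_eq_zero (hh : ContDiff ℝ 5 h) (h0 : h 0 = 0) {m k : ℕ} (hm : m ≤ 5)
    (hlt : (m : ℕ∞) < vanishOrder fun t => h (cuspCurve a b d t)) (hk : k ≤ m) :
    (cuspJet h a b d).coeff k = 0 := by
  have hcomp : (fun t => h (cuspCurve a b d t)) =o[𝓝 0] fun t => t ^ m :=
    isLittleO_pow_of_lt_vanishOrder
      ((hh.of_le (by exact_mod_cast hm)).comp (contDiff_cuspCurve a b d))
      (by rw [cuspCurve_zero, h0]) hlt
  have hremainder := (isBigO_comp_cuspCurve_sub_cuspJet (hh.of_le (by norm_num)) h0 a b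
    d).trans_isLittleO (isLittleO_pow_pow (show m < 6 by lia))
  refine coeff_eq_zero_of_eval_isLittleO (IsLittleO.mono ?_ nhdsWithin_le_nhds) hk
  exact (hcomp.sub hremainder).congr_left fun t => sub_sub_cancel _ _

theorem fderiv_eq_zero_of_two_lt_vanishOrder (hh : ContDiff ℝ 5 h) (h0 : h 0 = 0)
    (hlt : 2 < vanishOrder fun t => h (cuspCurve a b d t)) : fderiv ℝ h 0 a = 0 := by
  simpa [cuspJet, coeff_X_pow, -map_add] using
    coeff_cuspJet_eq_zero hh h0 (show 2 ≤ 5 by norm_num) hlt le_rfl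

theorem jet_eq_zero_of_five_lt_vanishOrder (hh : ContDiff ℝ 5 h) (h0 : h 0 = 0)
    (hlt : 5 < vanishOrder fun t => h (cuspCurve a b d t)) :
    fderiv ℝ h 0 a = 0 ∧ fderiv ℝ h 0 b = 0 ∧
      fderiv ℝ h 0 d + 2⁻¹ * fderiv ℝ (fderiv ℝ h) 0 a a = 0 ∧
      fderiv ℝ (fderiv ℝ h) 0 a b = 0 := by
  have hcoeff {k : ℕ} (hk : k ≤ 5) : (cuspJet h a b d).coeff k = 0 :=
    coeff_cuspJet_eq_zero hh h0 le_rfl hlt hk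
  refine ⟨?_, ?_, ?_, ?_⟩
  · simpa [cuspJet, coeff_X_pow, -map_add] using hcoeff (show 2 ≤ 5 by norm_num)
  · simpa [cuspJet, coeff_X_pow, -map_add] using hcoeff (show 3 ≤ 5 by norm_num)
  · simpa [cuspJet, coeff_X_pow, -map_add] using hcoeff (show 4 ≤ 5 by norm_num)
  · simpa [cuspJet, coeff_X_pow, -map_add] using hcoeff (show 5 ≤ 5 by norm_num)

end CuspCurve

section Symplectic

theorem iInf_ker_eq_span_toDual_symm {K V ι : Type*} [Field K] [AddCommGroup V] [Module K V]
    [FiniteDimensional K V] [Fintype ι] {B : LinearMap.BilinForm K V} (hB : B.Nondegenerate)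
    {φ : ι → Module.Dual K V} (hcard : 2 * Fintype.card ι ≤ Module.finrank K V)
    (hφ : ∀ u v, (∀ i, φ i u = 0) → (∀ i, φ i v = 0) → B u v = 0) :
    ⨅ i, (φ i).ker = Submodule.span K (Set.range fun i => (B.toDual hB).symm (φ i)) := by
  refine Submodule.eq_of_le_of_finrank_le (fun u hu => ?_) ?_
  · have hmem : B.toDual hB u ∈ Submodule.span K (Set.range φ) :=
      mem_span_of_iInf_ker_le_ker fun v hv => hφ u v (by simpa using hu) (by simpa using hv)
    have hmap := Submodule.mem_map_of_mem (f := (B.toDual hB).symm.toLinearMap) hmem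
    rwa [Submodule.map_span, ← Set.range_comp, LinearEquiv.coe_coe,
      LinearEquiv.symm_apply_apply] at hmap
  · have hspan : (Set.range fun i => (B.toDual hB).symm (φ i)).finrank K ≤ Fintype.card ι :=
      finrank_range_le_card _
    have hrange : Module.finrank K (LinearMap.pi φ).range ≤ Fintype.card ι :=
      (Submodule.finrank_le _).trans_eq (Module.finrank_fintype_fun_eq_card K)
    have hrank := (LinearMap.pi φ).finrank_range_add_finrank_ker
    rw [LinearMap.ker_pi] at hrank
    rw [Set.finrank] at hspan
    lia

variable {n : ℕ}

theorem stdSymp_antisymm (u v : Fin (2 * n) → ℝ) : stdSymp n u v = -stdSymp n v u := by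
  rw [stdSymp, stdSymp, ← Finset.sum_neg_distrib]
  exact Finset.sum_congr rfl fun i _ => by ring

/-- The standard symplectic form `stdSymp` as a bilinear form in the sense of the library. -/
def stdSympForm (n : ℕ) : LinearMap.BilinForm ℝ (Fin (2 * n) → ℝ) :=
  LinearMap.mk₂ ℝ (stdSymp n)
    (fun u u' v => by
      simp only [stdSymp, ← Finset.sum_add_distrib, Pi.add_apply]
      exact Finset.sum_congr rfl fun i _ => by ring)
    (fun c u v => by
      simp only [stdSymp, smul_eq_mul, Finset.mul_sum, Pi.smul_apply]
      exact Finset.sum_congr rfl fun i _ => by ring)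
    (fun u v v' => by
      simp only [stdSymp, ← Finset.sum_add_distrib, Pi.add_apply]
      exact Finset.sum_congr rfl fun i _ => by ring)
    (fun c u v => by
      simp only [stdSymp, smul_eq_mul, Finset.mul_sum, Pi.smul_apply]
      exact Finset.sum_congr rfl fun i _ => by ring)

theorem stdSympForm_apply (u v : Fin (2 * n) → ℝ) : stdSympForm n u v = stdSymp n u v := rfl

theorem stdSymp_single_two_mul_add_one (u : Fin (2 * n) → ℝ) (i : Fin n) :
    stdSymp n u (Pi.single ⟨2 * i + 1, by lia⟩ 1) = u ⟨2 * i, by lia⟩ := by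
  have hparity (j : Fin n) : 2 * (j : ℕ) ≠ 2 * i + 1 := by lia
  simp [stdSymp, Pi.single_apply, hparity, Fin.val_inj]

theorem stdSymp_single_two_mul (u : Fin (2 * n) → ℝ) (i : Fin n) :
    stdSymp n u (Pi.single ⟨2 * i, by lia⟩ 1) = -u ⟨2 * i + 1, by lia⟩ := by
  have hparity (j : Fin n) : 2 * (j : ℕ) + 1 ≠ 2 * i := by lia
  simp [stdSymp, Pi.single_apply, hparity, Fin.val_inj]

theorem eq_zero_of_forall_stdSymp_eq_zero {u : Fin (2 * n) → ℝ} (hu : ∀ v, stdSymp n u v = 0) :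
    u = 0 := by
  ext ⟨j, hj⟩
  obtain ⟨i, rfl | rfl⟩ := Nat.even_or_odd' j
  · exact (stdSymp_single_two_mul_add_one u ⟨i, by lia⟩).symm.trans (hu _)
  · exact neg_eq_zero.1 ((stdSymp_single_two_mul u ⟨i, by lia⟩).symm.trans (hu _))

theorem nondegenerate_stdSympForm (n : ℕ) : (stdSympForm n).Nondegenerate :=
  ⟨fun _ hu => eq_zero_of_forall_stdSymp_eq_zero hu, fun _ hv =>
    eq_zero_of_forall_stdSymp_eq_zero fun u => by
      rw [stdSymp_antisymm, ← stdSympForm_apply, hv, neg_zero]⟩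

/-- The musical isomorphism `♯` of the standard symplectic form, normalised by `ω(α♯, v) = α v`. -/
def sympSharp (n : ℕ) : StrongDual ℝ (Fin (2 * n) → ℝ) →L[ℝ] Fin (2 * n) → ℝ :=
  LinearMap.toContinuousLinearMap
    (((stdSympForm n).toDual (nondegenerate_stdSympForm n)).symm.toLinearMap ∘ₗ
      ContinuousLinearMap.coeLM ℝ)

theorem stdSymp_sympSharp (α : StrongDual ℝ (Fin (2 * n) → ℝ)) (v : Fin (2 * n) → ℝ) :
    stdSymp n (sympSharp n α) v = α v :=
  LinearMap.BilinForm.apply_toDual_symm_apply (hB := nondegenerate_stdSympForm n)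
    (α : Module.Dual ℝ (Fin (2 * n) → ℝ)) v

theorem apply_sympSharp_antisymm (α β : StrongDual ℝ (Fin (2 * n) → ℝ)) :
    α (sympSharp n β) = -β (sympSharp n α) := by
  rw [← stdSymp_sympSharp α, stdSymp_antisymm, stdSymp_sympSharp]

theorem iInf_ker_eq_span_sympSharp {φ : Fin n → StrongDual ℝ (Fin (2 * n) → ℝ)}
    (hφ : ∀ u v, (∀ i, φ i u = 0) → (∀ i, φ i v = 0) → stdSymp n u v = 0) :
    ⨅ i, (φ i).ker = Submodule.span ℝ (Set.range fun i => sympSharp n (φ i)) :=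
  iInf_ker_eq_span_toDual_symm (nondegenerate_stdSympForm n)
    (φ := fun i => (φ i : Module.Dual ℝ (Fin (2 * n) → ℝ))) (by simp) hφ

/-- The Poisson bracket `{h, k} = dh(dk♯)` of the standard symplectic form. -/
def poissonBracket (h k : (Fin (2 * n) → ℝ) → ℝ) (x : Fin (2 * n) → ℝ) : ℝ :=
  fderiv ℝ h x (sympSharp n (fderiv ℝ k x))

variable {h k : (Fin (2 * n) → ℝ) → ℝ}

theorem contDiff_poissonBracket (hh : ContDiff ℝ 2 h) (hk : ContDiff ℝ 2 k) :
    ContDiff ℝ 1 (poissonBracket h k) :=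
  (hh.fderiv_right (by norm_num)).clm_apply
    ((sympSharp n).contDiff.comp (hk.fderiv_right (by norm_num)))

theorem fderiv_poissonBracket_apply (hh : ContDiff ℝ 2 h) (hk : ContDiff ℝ 2 k)
    (x w : Fin (2 * n) → ℝ) :
    fderiv ℝ (poissonBracket h k) x w =
      fderiv ℝ (fderiv ℝ h) x w (sympSharp n (fderiv ℝ k x)) -
        fderiv ℝ (fderiv ℝ k) x w (sympSharp n (fderiv ℝ h x)) := by
  have hdh : HasFDerivAt (fderiv ℝ h) (fderiv ℝ (fderiv ℝ h) x) x :=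
    ((hh.fderiv_right (m := 1) (by norm_num)).differentiable one_ne_zero x).hasFDerivAt
  have hdk : HasFDerivAt (fderiv ℝ k) (fderiv ℝ (fderiv ℝ k) x) x :=
    ((hk.fderiv_right (m := 1) (by norm_num)).differentiable one_ne_zero x).hasFDerivAt
  have hbracket : HasFDerivAt (poissonBracket h k) _ x :=
    hdh.clm_apply ((sympSharp n).hasFDerivAt.comp x hdk)
  rw [hbracket.fderiv, add_apply, ContinuousLinearMap.comp_apply, ContinuousLinearMap.comp_apply,
    apply_sympSharp_antisymm, ContinuousLinearMap.flip_apply, neg_add_eq_sub]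

end Symplectic

namespace LagrangianGerm

variable {n : ℕ} (L : LagrangianGerm n)

theorem contDiff (m : ℕ) (i : Fin n) : ContDiff ℝ m (L.H i) :=
  contDiff_infty.1 (L.smooth i) m

theorem linearIndependent_fderiv : LinearIndependent ℝ fun i => fderiv ℝ (L.H i) 0 := by
  obtain ⟨U, -, h0U, hU⟩ := L.lagrangian
  exact (hU 0 h0U L.zero_at_zero).1

theorem stdSymp_eq_zero {u v : Fin (2 * n) → ℝ} (hu : ∀ i, fderiv ℝ (L.H i) 0 u = 0)
    (hv : ∀ i, fderiv ℝ (L.H i) 0 v = 0) : stdSymp n u v = 0 := by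
  obtain ⟨U, -, h0U, hU⟩ := L.lagrangian
  exact (hU 0 h0U L.zero_at_zero).2 u v hu hv

theorem eventually_poissonBracket_eq_zero (i j : Fin n) :
    ∀ᶠ x in 𝓝[{x | ∀ k, L.H k x = 0}] 0, poissonBracket (L.H i) (L.H j) x = 0 := by
  obtain ⟨U, hUopen, h0U, hU⟩ := L.lagrangian
  filter_upwards [self_mem_nhdsWithin, nhdsWithin_le_nhds (hUopen.mem_nhds h0U)] with x hxL hxU
  have hmem : sympSharp n (fderiv ℝ (L.H j) x) ∈ ⨅ i, (fderiv ℝ (L.H i) x).ker := by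
    rw [iInf_ker_eq_span_sympSharp (hU x hxU hxL).2]
    exact Submodule.subset_span ⟨j, rfl⟩
  exact (Submodule.mem_iInf _).1 hmem i

theorem fderiv_fderiv_sympSharp_comm (i j : Fin n) {w : Fin (2 * n) → ℝ}
    (hw : ∀ k, fderiv ℝ (L.H k) 0 w = 0) :
    fderiv ℝ (fderiv ℝ (L.H i)) 0 w (sympSharp n (fderiv ℝ (L.H j) 0)) =
      fderiv ℝ (fderiv ℝ (L.H j)) 0 w (sympSharp n (fderiv ℝ (L.H i) 0)) := by
  have hbracket := L.eventually_poissonBracket_eq_zero i j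
  have hextr : IsLocalExtrOn (poissonBracket (L.H i) (L.H j)) {x | ∀ k, L.H k x = L.H k 0} 0 := by
    simp only [L.zero_at_zero]
    have h0 := hbracket.self_of_nhdsWithin L.zero_at_zero
    exact .inl (hbracket.mono fun x hx => h0.trans hx.symm |>.le)
  have hdbracket := apply_eq_zero_of_isLocalExtrOn hextr
    (fun k => (L.contDiff 1 k).contDiffAt.hasStrictFDerivAt one_ne_zero)
    ((contDiff_poissonBracket (L.contDiff 2 i) (L.contDiff 2 j)).contDiffAt.hasStrictFDerivAt
      one_ne_zero) L.linearIndependent_fderiv hw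
  rwa [fderiv_poissonBracket_apply (L.contDiff 2 i) (L.contDiff 2 j), sub_eq_zero] at hdbracket

theorem exists_eq_sum_smul_sympSharp {u : Fin (2 * n) → ℝ}
    (hu : ∀ i, fderiv ℝ (L.H i) 0 u = 0) :
    ∃ c : Fin n → ℝ, u = ∑ i, c i • sympSharp n (fderiv ℝ (L.H i) 0) := by
  have hmem : u ∈ ⨅ i, (fderiv ℝ (L.H i) 0).ker := (Submodule.mem_iInf _).2 hu
  rw [iInf_ker_eq_span_sympSharp fun _ _ => L.stdSymp_eq_zero,
    Submodule.mem_span_range_iff_exists_fun] at hmem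
  exact hmem.imp fun c hc => hc.symm

/-- This is `ω(u, v) = 0` differentiated along `L` in the direction `w`: the hypotheses on `u'` and
`v'` say that they are derivatives along `w` of tangent vector fields of `L` extending `u` and `v`.
-/
theorem stdSymp_add_stdSymp_eq_zero {u v w u' v' : Fin (2 * n) → ℝ}
    (hu : ∀ i, fderiv ℝ (L.H i) 0 u = 0) (hv : ∀ i, fderiv ℝ (L.H i) 0 v = 0)
    (hw : ∀ i, fderiv ℝ (L.H i) 0 w = 0)
    (hu' : ∀ i, fderiv ℝ (L.H i) 0 u' + fderiv ℝ (fderiv ℝ (L.H i)) 0 w u = 0)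
    (hv' : ∀ i, fderiv ℝ (L.H i) 0 v' + fderiv ℝ (fderiv ℝ (L.H i)) 0 w v = 0) :
    stdSymp n u' v + stdSymp n u v' = 0 := by
  obtain ⟨α, hα⟩ := L.exists_eq_sum_smul_sympSharp hu
  obtain ⟨β, hβ⟩ := L.exists_eq_sum_smul_sympSharp hv
  have pairing {z z' : Fin (2 * n) → ℝ} {γ : Fin n → ℝ}
      (hz : z = ∑ i, γ i • sympSharp n (fderiv ℝ (L.H i) 0)) :
      stdSymp n z z' = ∑ i, γ i * fderiv ℝ (L.H i) 0 z' := by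
    simp only [hz, ← stdSympForm_apply, map_sum, map_smul, LinearMap.sum_apply,
      LinearMap.smul_apply, smul_eq_mul]
    simp only [stdSympForm_apply, stdSymp_sympSharp]
  rw [stdSymp_antisymm u' v, pairing hα, pairing hβ]
  simp only [fun i => eq_neg_of_add_eq_zero_left (hu' i),
    fun i => eq_neg_of_add_eq_zero_left (hv' i)]
  have hsymm : ∑ i, β i * fderiv ℝ (fderiv ℝ (L.H i)) 0 w u =
      ∑ i, α i * fderiv ℝ (fderiv ℝ (L.H i)) 0 w v := by
    rw [hα, hβ]
    simp only [map_sum, map_smul, smul_eq_mul, Finset.mul_sum]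
    rw [Finset.sum_comm]
    refine Finset.sum_congr rfl fun i _ => Finset.sum_congr rfl fun j _ => ?_
    rw [L.fderiv_fderiv_sympSharp_comm i j hw]
    ring
  simp [hsymm]

end LagrangianGerm

section UpperBounds

variable {n : ℕ} {a b d a' b' d' : Fin (2 * n) → ℝ}

theorem two_le_tOrd {f : ℝ → Fin (2 * n) → ℝ} (hf : HasDerivAt f 0 0) (L : LagrangianGerm n) :
    2 ≤ tOrd f L :=
  le_iInf fun i => two_le_vanishOrder <| by
    have hH := ((L.contDiff 1 i).differentiable one_ne_zero (f 0)).hasFDerivAt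
    exact (hH.comp_hasDerivAt 0 hf).deriv.trans (map_zero _)

theorem fderiv_eq_zero_of_two_lt_tOrd {L : LagrangianGerm n} (hL : 2 < tOrd (cuspCurve a b d) L)
    (i : Fin n) : fderiv ℝ (L.H i) 0 a = 0 :=
  fderiv_eq_zero_of_two_lt_vanishOrder (L.contDiff 5 i) (L.zero_at_zero i)
    (hL.trans_le (iInf_le _ i))

theorem stdSymp_eq_zero_of_five_lt_tOrd {L : LagrangianGerm n}
    (hL : 5 < tOrd (cuspCurve a b d) L) : stdSymp n b d = 0 := by
  have hjet (i : Fin n) := jet_eq_zero_of_five_lt_vanishOrder (L.contDiff 5 i) (L.zero_at_zero i)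
    (hL.trans_le (iInf_le _ i))
  have ha (i : Fin n) := (hjet i).1
  have hb (i : Fin n) := (hjet i).2.1
  -- Along `L`, the tangent fields extending `a` and `b` have `a`-derivatives `2d` and `0` at `0`.
  have hsum := L.stdSymp_add_stdSymp_eq_zero (u' := (2 : ℝ) • d) (v' := 0) ha hb ha
    (fun i => by rw [map_smul, smul_eq_mul]; linear_combination 2 * (hjet i).2.2.1)
    (fun i => by rw [map_zero, zero_add, (hjet i).2.2.2])
  simp only [← stdSympForm_apply, map_smul, map_zero, LinearMap.smul_apply, smul_eq_mul,
    add_zero] at hsum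
  rw [stdSympForm_apply, stdSymp_antisymm] at hsum
  linarith

theorem Lt1_cuspCurve_le_five (hbd : stdSymp n b d ≠ 0) : Lt1 (cuspCurve a b d) ≤ 5 :=
  iSup_le fun _ => not_lt.1 fun hL => hbd (stdSymp_eq_zero_of_five_lt_tOrd hL)

theorem Lt2_cuspCurve_le_two (haa' : stdSymp n a a' ≠ 0) :
    Lt2 (cuspCurve a b d) (cuspCurve a' b' d') ≤ 2 :=
  iSup_le fun L => not_lt.1 fun hL => haa' <| L.stdSymp_eq_zero
    (fderiv_eq_zero_of_two_lt_tOrd (hL.trans_le (min_le_left _ _)))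
    (fderiv_eq_zero_of_two_lt_tOrd (hL.trans_le (min_le_right _ _)))

end UpperBounds

section GeneratingFunction

/-- Linear Darboux coordinates `(p, q)` on `(ℝ^{2n}, ω)`, that is, `ω = ∑ dpᵢ ∧ dqᵢ`. -/
structure DarbouxCoords (n : ℕ) where
  p : Fin n → StrongDual ℝ (Fin (2 * n) → ℝ)
  q : Fin n → StrongDual ℝ (Fin (2 * n) → ℝ)
  stdSymp_eq : ∀ u v, stdSymp n u v = ∑ i, (p i u * q i v - q i u * p i v)

namespace DarbouxCoords

variable {n : ℕ} (D : DarbouxCoords n)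

/-- The coordinates in which `stdSymp` is defined. -/
def std (n : ℕ) : DarbouxCoords n where
  p i := ContinuousLinearMap.proj ⟨2 * i, by lia⟩
  q i := ContinuousLinearMap.proj ⟨2 * i + 1, by lia⟩
  stdSymp_eq _ _ := rfl

theorem std_p_apply (i : Fin n) (u : Fin (2 * n) → ℝ) : (std n).p i u = u ⟨2 * i, by lia⟩ := rfl

theorem std_q_apply (i : Fin n) (u : Fin (2 * n) → ℝ) :
    (std n).q i u = u ⟨2 * i + 1, by lia⟩ := rfl

/-- The coordinates obtained by the symplectic rotation `(pₖ, qₖ) ↦ (qₖ, -pₖ)`. -/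
def rotate (k : Fin n) : DarbouxCoords n where
  p := Function.update D.p k (D.q k)
  q := Function.update D.q k (-D.p k)
  stdSymp_eq u v := by
    rw [D.stdSymp_eq]
    refine Finset.sum_congr rfl fun i _ => ?_
    obtain rfl | hik := eq_or_ne i k
    · simp only [Function.update_self, neg_apply]
      ring
    · simp only [Function.update_of_ne hik]

theorem rotate_p_apply (k i : Fin n) (u : Fin (2 * n) → ℝ) :
    (D.rotate k).p i u = if i = k then D.q k u else D.p i u := by
  simp only [rotate, Function.update_apply, apply_ite (fun φ : StrongDual ℝ _ => φ u)]

theorem rotate_q_apply (k i : Fin n) (u : Fin (2 * n) → ℝ) :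
    (D.rotate k).q i u = if i = k then -D.p k u else D.q i u := by
  simp only [rotate, Function.update_apply, apply_ite (fun φ : StrongDual ℝ _ => φ u), neg_apply]

/-- Darboux coordinates as a linear isomorphism onto the space of pairs `(p, q)`. -/
def equiv : (Fin (2 * n) → ℝ) ≃ₗ[ℝ] (Fin n → ℝ) × (Fin n → ℝ) :=
  LinearEquiv.ofInjectiveOfFinrankEq
    ((LinearMap.pi fun i => (D.p i).toLinearMap).prod (LinearMap.pi fun i => (D.q i).toLinearMap))
    (by
      refine (injective_iff_map_eq_zero _).2 fun u hu =>
        eq_zero_of_forall_stdSymp_eq_zero fun v => ?_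
      have hp (i : Fin n) : D.p i u = 0 := congrFun (congrArg Prod.fst hu) i
      have hq (i : Fin n) : D.q i u = 0 := congrFun (congrArg Prod.snd hu) i
      simp [D.stdSymp_eq, hp, hq])
    (by simp [two_mul])

/-- The point with coordinates `p = x` and `q = y`. -/
def point (x y : Fin n → ℝ) : Fin (2 * n) → ℝ :=
  D.equiv.symm (x, y)

theorem p_point (x y : Fin n → ℝ) (i : Fin n) : D.p i (D.point x y) = x i :=
  congrFun (congrArg Prod.fst (D.equiv.apply_symm_apply (x, y))) i

theorem q_point (x y : Fin n → ℝ) (i : Fin n) : D.q i (D.point x y) = y i :=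
  congrFun (congrArg Prod.snd (D.equiv.apply_symm_apply (x, y))) i

theorem eq_of_forall_p_eq_of_forall_q_eq {u v : Fin (2 * n) → ℝ} (hp : ∀ i, D.p i u = D.p i v)
    (hq : ∀ i, D.q i u = D.q i v) : u = v :=
  D.equiv.injective (Prod.ext (funext hp) (funext hq))

theorem stdSymp_point (x y x' y' : Fin n → ℝ) :
    stdSymp n (D.point x y) (D.point x' y') = ∑ i, (x i * y' i - y i * x' i) := by
  simp only [D.stdSymp_eq, p_point, q_point]

/-- All the momentum coordinates at once. -/
def momentum : (Fin (2 * n) → ℝ) →L[ℝ] Fin n → ℝ :=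
  ContinuousLinearMap.pi D.p

end DarbouxCoords

variable {n : ℕ} {D : DarbouxCoords n} {S : (Fin n → ℝ) → ℝ}

/-- `qᵢ - ∂S/∂pᵢ`, the `i`-th equation of the graph of `dS` in Darboux coordinates. -/
def graphEquation (D : DarbouxCoords n) (S : (Fin n → ℝ) → ℝ) (i : Fin n)
    (x : Fin (2 * n) → ℝ) : ℝ :=
  D.q i x - fderiv ℝ S (D.momentum x) (Pi.single i 1)

theorem contDiff_graphEquation (hS : ContDiff ℝ ∞ S) (i : Fin n) :
    ContDiff ℝ ∞ (graphEquation D S i) :=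
  (D.q i).contDiff.sub
    (((hS.fderiv_right (by simp)).comp D.momentum.contDiff).clm_apply contDiff_const)

theorem fderiv_graphEquation_apply (hS : ContDiff ℝ 2 S) (i : Fin n) (x u : Fin (2 * n) → ℝ) :
    fderiv ℝ (graphEquation D S i) x u =
      D.q i u - fderiv ℝ (fderiv ℝ S) (D.momentum x) (D.momentum u) (Pi.single i 1) := by
  have hdS : HasFDerivAt (fderiv ℝ S) (fderiv ℝ (fderiv ℝ S) (D.momentum x)) (D.momentum x) :=
    ((hS.fderiv_right (m := 1) (by norm_num)).differentiable one_ne_zero _).hasFDerivAt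
  have hgraph : HasFDerivAt (graphEquation D S i) _ x := (D.q i).hasFDerivAt.sub
    ((hdS.comp x D.momentum.hasFDerivAt).clm_apply (hasFDerivAt_const (Pi.single i 1) x))
  rw [hgraph.fderiv]
  simp

theorem linearIndependent_fderiv_graphEquation (hS : ContDiff ℝ 2 S) (x : Fin (2 * n) → ℝ) :
    LinearIndependent ℝ fun i => fderiv ℝ (graphEquation D S i) x := by
  refine Fintype.linearIndependent_iff.2 fun g hg i => ?_
  have hmomentum : D.momentum (D.point 0 (Pi.single i 1)) = 0 :=
    funext fun j => D.p_point _ _ j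
  have happly := congr($hg (D.point 0 (Pi.single i 1)))
  simpa [fderiv_graphEquation_apply hS, hmomentum, D.q_point, Pi.single_apply] using happly

theorem stdSymp_eq_zero_of_fderiv_graphEquation_eq_zero (hS : ContDiff ℝ 2 S)
    {x u v : Fin (2 * n) → ℝ} (hu : ∀ i, fderiv ℝ (graphEquation D S i) x u = 0)
    (hv : ∀ i, fderiv ℝ (graphEquation D S i) x v = 0) : stdSymp n u v = 0 := by
  simp only [fderiv_graphEquation_apply hS, sub_eq_zero] at hu hv
  set Q := fderiv ℝ (fderiv ℝ S) (D.momentum x)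
  have hQ (y : Fin n → ℝ) (w : Fin (2 * n) → ℝ) :
      ∑ i, D.p i w * Q y (Pi.single i 1) = Q y (D.momentum w) := by
    conv_rhs => rw [pi_eq_sum_univ' (D.momentum w)]
    simp [DarbouxCoords.momentum]
  calc stdSymp n u v
      = ∑ i, (D.p i u * Q (D.momentum v) (Pi.single i 1) -
          D.p i v * Q (D.momentum u) (Pi.single i 1)) := by
        rw [D.stdSymp_eq]
        exact Finset.sum_congr rfl fun i _ => by rw [hu, hv, mul_comm (Q _ _)]
    _ = Q (D.momentum v) (D.momentum u) - Q (D.momentum u) (D.momentum v) := by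
        rw [Finset.sum_sub_distrib, hQ, hQ]
    _ = 0 := sub_eq_zero.2 (fderiv_fderiv_comm hS _ _ _)

/-- The germ at `0` of the Lagrangian submanifold `q = dS(p)` with generating function `S`. -/
def LagrangianGerm.ofGeneratingFunction (D : DarbouxCoords n) (S : (Fin n → ℝ) → ℝ)
    (hS : ContDiff ℝ ∞ S) (hS0 : fderiv ℝ S 0 = 0) : LagrangianGerm n where
  H := graphEquation D S
  smooth i := contDiff_graphEquation hS i
  zero_at_zero i := by simp [graphEquation, hS0]
  lagrangian := by
    have hS2 : ContDiff ℝ 2 S := contDiff_infty.1 hS 2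
    exact ⟨Set.univ, isOpen_univ, trivial, fun x _ _ =>
      ⟨linearIndependent_fderiv_graphEquation hS2 x, fun _ _ hu hv =>
        stdSymp_eq_zero_of_fderiv_graphEquation_eq_zero hS2 hu hv⟩⟩

theorem two_le_Lt2 {f g : ℝ → Fin (2 * n) → ℝ} (hf : HasDerivAt f 0 0) (hg : HasDerivAt g 0 0) :
    2 ≤ Lt2 f g :=
  le_iSup_of_le (LagrangianGerm.ofGeneratingFunction (.std n) 0 contDiff_const (by simp))
    (le_min (two_le_tOrd hf _) (two_le_tOrd hg _))

end GeneratingFunction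

namespace DarbouxCoords

variable {n : ℕ} (D : DarbouxCoords n) (i j : Fin n) (c : ℝ)

/-- The branch `pᵢ = t³`, `qᵢ = c t⁴`, `pⱼ = -t²` in the Darboux coordinates `D`. -/
def branch : ℝ → Fin (2 * n) → ℝ :=
  cuspCurve (D.point (Pi.single j (-1)) 0) (D.point (Pi.single i 1) 0) (D.point 0 (Pi.single i c))

theorem p_branch (k : Fin n) (t : ℝ) :
    D.p k (D.branch i j c t) = (if k = i then t ^ 3 else 0) + if k = j then -t ^ 2 else 0 := by
  simp [branch, cuspCurve, p_point, Pi.single_apply, add_comm]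

theorem q_branch (k : Fin n) (t : ℝ) :
    D.q k (D.branch i j c t) = if k = i then c * t ^ 4 else 0 := by
  simp [branch, cuspCurve, q_point, Pi.single_apply, mul_comm]

theorem stdSymp_rotate_point_single (x y : ℝ) :
    stdSymp n ((D.rotate j).point (Pi.single j x) 0) (D.point (Pi.single j y) 0) = -(x * y) := by
  simp [(D.rotate j).stdSymp_eq, p_point, q_point, rotate_q_apply, Pi.single_apply]

theorem Lt2_rotate_branch (c' : ℝ) :
    Lt2 ((D.rotate j).branch i j c) (D.branch i j c') = 2 :=
  le_antisymm (Lt2_cuspCurve_le_two (by simp [stdSymp_rotate_point_single]))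
    (two_le_Lt2 (hasDerivAt_cuspCurve_zero _ _ _) (hasDerivAt_cuspCurve_zero _ _ _))

theorem std_branch (hn : 2 ≤ n) :
    (std n).branch ⟨0, by lia⟩ ⟨1, by lia⟩ c = fun (t : ℝ) (l : Fin (2 * n)) =>
      if (l : ℕ) = 0 then t ^ 3 else if (l : ℕ) = 1 then c * t ^ 4 else
        if (l : ℕ) = 2 then -t ^ 2 else 0 := by
  refine funext fun t => (std n).eq_of_forall_p_eq_of_forall_q_eq (fun k => ?_) fun k => ?_
  · rw [p_branch, std_p_apply]
    grind
  · rw [q_branch, std_q_apply]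
    grind

theorem std_rotate_branch (hn : 2 ≤ n) :
    ((std n).rotate ⟨1, by lia⟩).branch ⟨0, by lia⟩ ⟨1, by lia⟩ c =
      fun (t : ℝ) (l : Fin (2 * n)) =>
        if (l : ℕ) = 0 then t ^ 3 else if (l : ℕ) = 1 then c * t ^ 4 else
          if (l : ℕ) = 3 then -t ^ 2 else 0 := by
  refine funext fun t => ((std n).rotate ⟨1, by lia⟩).eq_of_forall_p_eq_of_forall_q_eq
    (fun k => ?_) fun k => ?_
  · rw [p_branch, rotate_p_apply, std_p_apply, std_q_apply]
    grind
  · rw [q_branch, rotate_q_apply, std_p_apply, std_q_apply]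
    grind

/-- The generating function `c pᵢ pⱼ²` of a Lagrangian germ tangent to `D.branch i j c`. -/
def branchPotential (x : Fin n → ℝ) : ℝ :=
  c * x i * x j ^ 2

theorem contDiff_branchPotential : ContDiff ℝ ∞ (branchPotential i j c) := by
  unfold branchPotential; fun_prop

theorem fderiv_branchPotential_apply (x y : Fin n → ℝ) :
    fderiv ℝ (branchPotential i j c) x y = c * x j * (x j * y i + 2 * x i * y j) := by
  have hi := (ContinuousLinearMap.proj (R := ℝ) (φ := fun _ : Fin n => ℝ) i).hasFDerivAt (x := x)
  have hj := (ContinuousLinearMap.proj (R := ℝ) (φ := fun _ : Fin n => ℝ) j).hasFDerivAt (x := x)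
  have hS : HasFDerivAt (branchPotential i j c) _ x := (hi.const_mul c).mul (hj.pow 2)
  rw [hS.fderiv]
  simp only [ContinuousLinearMap.proj_apply, Nat.add_one_sub_one, pow_one, nsmul_eq_mul,
    Nat.cast_ofNat, add_apply, smul_apply, smul_eq_mul]
  ring

/-- The Lagrangian germ generated by `c pᵢ pⱼ²`. -/
def branchGerm : LagrangianGerm n :=
  .ofGeneratingFunction D (branchPotential i j c) (contDiff_branchPotential i j c) <| by
    ext y
    simp [fderiv_branchPotential_apply]

variable {i j}

theorem branchGerm_H_branch (hij : i ≠ j) (k : Fin n) (t : ℝ) :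
    (D.branchGerm i j c).H k (D.branch i j c t) = (if k = j then 2 * c else 0) * t ^ 5 := by
  have hmomentum (l : Fin n) : D.momentum (D.branch i j c t) l =
      (if l = i then t ^ 3 else 0) + if l = j then -t ^ 2 else 0 := D.p_branch i j c l t
  simp only [branchGerm, LagrangianGerm.ofGeneratingFunction, graphEquation,
    fderiv_branchPotential_apply, hmomentum, q_branch]
  simp only [if_pos, if_neg hij, if_neg hij.symm, Pi.single_apply, eq_comm (b := k)]
  split_ifs with hki hkj
  · exact absurd (hki.symm.trans hkj) hij
  all_goals ring

theorem five_le_Lt1_branch (hij : i ≠ j) : 5 ≤ Lt1 (D.branch i j c) :=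
  le_iSup_of_le (D.branchGerm i j c) <| le_iInf fun k => by
    simp only [D.branchGerm_H_branch c hij]
    exact natCast_le_vanishOrder_const_mul_pow _ 5

theorem Lt1_branch (hij : i ≠ j) (hc : c ≠ 0) : Lt1 (D.branch i j c) = 5 :=
  le_antisymm (Lt1_cuspCurve_le_five (by simpa [stdSymp_point, Pi.single_apply] using hc))
    (D.five_le_Lt1_branch c hij)

theorem Lt1_branch_zero (hij : i ≠ j) : Lt1 (D.branch i j 0) = ⊤ :=
  top_le_iff.1 <| le_iSup_of_le (D.branchGerm i j 0) <| le_iInf fun k => by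
    simp [D.branchGerm_H_branch 0 hij, vanishOrder_const]

end DarbouxCoords

/-- Lagrangian tangency orders for the class `(T₇)²`. -/
theorem T7_2_lagrangian_tangency_orders
    (n : ℕ) (hn : 2 ≤ n) (c₁ c₂ : ℝ) (hc : (c₁, c₂) ≠ (0, 0))
    (B₁ B₂ : ℝ → Fin (2 * n) → ℝ)
    (hB₁ : B₁ = fun (t : ℝ) (j : Fin (2 * n)) => if (j : ℕ) = 0 then t ^ 3 else if (j : ℕ) = 1 then (c₁ ^ 2 / 2) * t ^ 4 else if (j : ℕ) = 3 then -t ^ 2 else (0 : ℝ))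
    (hB₂ : B₂ = fun (t : ℝ) (j : Fin (2 * n)) => if (j : ℕ) = 0 then t ^ 3 else if (j : ℕ) = 1 then (c₂ ^ 2 / 2) * t ^ 4 else if (j : ℕ) = 2 then -t ^ 2 else (0 : ℝ)) :
    Lt2 B₁ B₂ = 2 ∧
    (c₁ ≠ 0 → Lt1 B₁ = 5) ∧ (c₁ = 0 → Lt1 B₁ = ⊤) ∧
    (c₂ ≠ 0 → Lt1 B₂ = 5) ∧ (c₂ = 0 → Lt1 B₂ = ⊤) := by
  have h01 : (⟨0, by lia⟩ : Fin n) ≠ ⟨1, by lia⟩ := by simp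
  rw [← DarbouxCoords.std_rotate_branch _ hn] at hB₁
  rw [← DarbouxCoords.std_branch _ hn] at hB₂
  subst hB₁ hB₂
  refine ⟨DarbouxCoords.Lt2_rotate_branch _ _ _ _ _, fun hc₁ => ?_, ?_, fun hc₂ => ?_, ?_⟩
  · exact DarbouxCoords.Lt1_branch _ _ h01 (by positivity)
  · rintro rfl
    simpa using DarbouxCoords.Lt1_branch_zero _ h01
  · exact DarbouxCoords.Lt1_branch _ _ h01 (by positivity)
  · rintro rfl
    simpa using DarbouxCoords.Lt1_branch_zero _ h01

end
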